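/- In the calculus λ_S, the reset-lift axiom is validated by applicative bisimilarity: for all terms t0, t1 such that both sides are closed, ⟨(λx.t0) ⟨t1⟩⟩ ≈_app (λx.⟨t0⟩) ⟨t1⟩. -/

import Mathlib

namespace LambdaS

/-- Terms of the calculus λ_S: variables, λ-abstractions, applications,
the shift operator `S k.t`, and the reset delimiter `⟨t⟩`. -/
inductive Tm : Type
  | var : ℕ → Tm
  | lam : ℕ → Tm → Tm
  | app : Tm → Tm → Tm
  | shift : ℕ → Tm → Tm
  | reset : Tm → Tm
  deriving DecidableEq

/-- A variable fresh for a finite set of variables. -/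
def fresh (s : Finset ℕ) : ℕ := if h : s.Nonempty then s.max' h + 1 else 0

namespace Tm

/-- Free variables. -/
def fv : Tm → Finset ℕ
  | var x => {x}
  | lam x t => fv t \ {x}
  | app t u => fv t ∪ fv u
  | shift k t => fv t \ {k}
  | reset t => fv t

def size : Tm → ℕ
  | var _ => 1
  | lam _ t => size t + 1
  | app t u => size t + size u + 1
  | shift _ t => size t + 1
  | reset t => size t + 1

/-- Renaming of free occurrences of a variable (used for α-renaming with a
fresh target variable). -/
def rename : Tm → ℕ → ℕ → Tm
  | var w, y, z => if w = y then var z else var w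
  | lam w t, y, z => if w = y then lam w t else lam w (rename t y z)
  | app t u, y, z => app (rename t y z) (rename u y z)
  | shift w t, y, z => if w = y then shift w t else shift w (rename t y z)
  | reset t, y, z => reset (rename t y z)

theorem size_rename (t : Tm) (y z : ℕ) : size (rename t y z) = size t := by
  induction t generalizing y z with
  | var w => simp only [rename]; split <;> rfl
  | lam w t ih => simp only [rename]; split <;> simp [size, ih]
  | app t u iht ihu => simp [rename, size, iht, ihu]
  | shift w t ih => simp only [rename]; split <;> simp [size, ih]
  | reset t ih => simp [rename, size, ih]

/-- Capture-avoiding substitution `t{v/x}` of `v` for the free occurrences of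
`x` in `t`; bound variables are α-renamed when needed. -/
def subst : Tm → ℕ → Tm → Tm
  | var w, x, v => if w = x then v else var w
  | lam y t, x, v =>
      if y = x then lam y t
      else if y ∈ fv v then
        lam (fresh (fv v ∪ fv t ∪ {x}))
          (subst (rename t y (fresh (fv v ∪ fv t ∪ {x}))) x v)
      else lam y (subst t x v)
  | app t u, x, v => app (subst t x v) (subst u x v)
  | shift y t, x, v =>
      if y = x then shift y t
      else if y ∈ fv v then
        shift (fresh (fv v ∪ fv t ∪ {x}))
          (subst (rename t y (fresh (fv v ∪ fv t ∪ {x}))) x v)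
      else shift y (subst t x v)
  | reset t, x, v => reset (subst t x v)
termination_by t _ _ => size t
decreasing_by all_goals simp [size_rename, size] <;> omega

end Tm

/-- Values: variables and λ-abstractions. -/
inductive IsValue : Tm → Prop
  | var (x : ℕ) : IsValue (Tm.var x)
  | lam (x : ℕ) (t : Tm) : IsValue (Tm.lam x t)

/-- A term is closed if it has no free variables. -/
def Closed (t : Tm) : Prop := t.fv = ∅

/-- Pure evaluation contexts E ::= □ | v E | E t. -/
inductive ECtx : Type
  | hole : ECtx
  | appR : (v : Tm) → IsValue v → ECtx → ECtx
  | appL : ECtx → Tm → ECtx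

def ECtx.plug : ECtx → Tm → Tm
  | .hole, t => t
  | .appR v _ E, t => Tm.app v (E.plug t)
  | .appL E u, t => Tm.app (E.plug t) u

def ECtx.fv : ECtx → Finset ℕ
  | .hole => ∅
  | .appR v _ E => v.fv ∪ E.fv
  | .appL E u => E.fv ∪ u.fv

/-- Composition of pure contexts: `(E.comp E').plug t = E.plug (E'.plug t)`. -/
def ECtx.comp : ECtx → ECtx → ECtx
  | .hole, E' => E'
  | .appR v hv E, E' => .appR v hv (E.comp E')
  | .appL E u, E' => .appL (E.comp E') u

/-- Evaluation contexts F ::= □ | v F | F t | ⟨F⟩. -/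
inductive FCtx : Type
  | hole : FCtx
  | appR : (v : Tm) → IsValue v → FCtx → FCtx
  | appL : FCtx → Tm → FCtx
  | reset : FCtx → FCtx

def FCtx.plug : FCtx → Tm → Tm
  | .hole, t => t
  | .appR v _ F, t => Tm.app v (F.plug t)
  | .appL F u, t => Tm.app (F.plug t) u
  | .reset F, t => Tm.reset (F.plug t)

def FCtx.fv : FCtx → Finset ℕ
  | .hole => ∅
  | .appR v _ F => v.fv ∪ F.fv
  | .appL F u => F.fv ∪ u.fv
  | .reset F => F.fv

/-- The function `λx.⟨E[x]⟩` representing the captured delimited context `E`,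
where `x` is chosen fresh (in particular `x ∉ fv E`). -/
def contFun (E : ECtx) : Tm :=
  Tm.lam (fresh E.fv) (Tm.reset (E.plug (Tm.var (fresh E.fv))))

/-- Call-by-value reduction →_v of λ_S. -/
inductive Red : Tm → Tm → Prop
  | beta (F : FCtx) (x : ℕ) (t v : Tm) :
      IsValue v →
      Red (F.plug (Tm.app (Tm.lam x t) v)) (F.plug (t.subst x v))
  | capture (F : FCtx) (E : ECtx) (k : ℕ) (t : Tm) :
      Red (F.plug (Tm.reset (E.plug (Tm.shift k t))))
          (F.plug (Tm.reset (t.subst k (contFun E))))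
  | resetVal (F : FCtx) (v : Tm) :
      IsValue v →
      Red (F.plug (Tm.reset v)) (F.plug v)

/-- A stuck term: not a value and unable to reduce. -/
def Stuck (t : Tm) : Prop := ¬ IsValue t ∧ ∀ t', ¬ Red t t'

/-- Normal forms: values and stuck terms. -/
def NormalForm (t : Tm) : Prop := IsValue t ∨ Stuck t

/-- A control-stuck term has the form E[S k.t]. -/
def ControlStuck (t : Tm) : Prop :=
  ∃ (E : ECtx) (k : ℕ) (s : Tm), t = E.plug (Tm.shift k s)

/-- Evaluation: `t ⇓ t'` iff `t →_v* t'` and `t'` is a normal form. -/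
def Evals (t t' : Tm) : Prop := Relation.ReflTransGen Red t t' ∧ NormalForm t'

/-- `t` evaluates to some value. -/
def EvalsToValue (t : Tm) : Prop := ∃ v, Relation.ReflTransGen Red t v ∧ IsValue v

/-- `t` evaluates to some control-stuck term. -/
def EvalsToStuck (t : Tm) : Prop :=
  ∃ s, Relation.ReflTransGen Red t s ∧ ControlStuck s

/-- General contexts C ::= □ | λx.C | t C | C t | S k.C | ⟨C⟩. -/
inductive Ctx : Type
  | hole : Ctx
  | lam : ℕ → Ctx → Ctx
  | appL : Ctx → Tm → Ctx
  | appR : Tm → Ctx → Ctx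
  | shift : ℕ → Ctx → Ctx
  | reset : Ctx → Ctx

def Ctx.plug : Ctx → Tm → Tm
  | .hole, t => t
  | .lam x C, t => Tm.lam x (C.plug t)
  | .appL C u, t => Tm.app (C.plug t) u
  | .appR u C, t => Tm.app u (C.plug t)
  | .shift k C, t => Tm.shift k (C.plug t)
  | .reset C, t => Tm.reset (C.plug t)

def Ctx.fv : Ctx → Finset ℕ
  | .hole => ∅
  | .lam x C => C.fv \ {x}
  | .appL C u => C.fv ∪ u.fv
  | .appR u C => u.fv ∪ C.fv
  | .shift k C => C.fv \ {k}
  | .reset C => C.fv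

/-- Contextual equivalence ≈ for the relaxed semantics (on closed terms):
tests evaluation to values and evaluation to control-stuck terms in every
closed context. -/
def CtxEquiv (t0 t1 : Tm) : Prop :=
  ∀ C : Ctx, C.fv = ∅ →
    (EvalsToValue (C.plug t0) ↔ EvalsToValue (C.plug t1)) ∧
    (EvalsToStuck (C.plug t0) ↔ EvalsToStuck (C.plug t1))

/-- Contextual equivalence ≈_p for the original semantics: tests evaluation to
values of ⟨C[·]⟩ in every closed context C. -/
def CtxEquivP (t0 t1 : Tm) : Prop :=
  ∀ C : Ctx, C.fv = ∅ →
    (EvalsToValue (Tm.reset (C.plug t0)) ↔ EvalsToValue (Tm.reset (C.plug t1)))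

/-- Contextual equivalence ≈_E testing only with closed evaluation contexts. -/
def ECtxEquiv (t0 t1 : Tm) : Prop :=
  ∀ F : FCtx, F.fv = ∅ →
    (EvalsToValue (F.plug t0) ↔ EvalsToValue (F.plug t1)) ∧
    (EvalsToStuck (F.plug t0) ↔ EvalsToStuck (F.plug t1))

/-- Applicative simulation. -/
def IsAppSim (R : Tm → Tm → Prop) : Prop :=
  ∀ t0 t1, R t0 t1 →
    (∀ t0', Red t0 t0' →
      ∃ t1', Relation.ReflTransGen Red t1 t1' ∧ R t0' t1') ∧
    (∀ x t0', t0 = Tm.lam x t0' →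
      ∃ t1', Relation.ReflTransGen Red t1 (Tm.lam x t1') ∧
        ∀ v, IsValue v → Closed v → R (t0'.subst x v) (t1'.subst x v)) ∧
    (∀ (E0 : ECtx) (k : ℕ) (t0' : Tm), t0 = E0.plug (Tm.shift k t0') →
      ∃ (E1 : ECtx) (t1' : Tm),
        Relation.ReflTransGen Red t1 (E1.plug (Tm.shift k t1')) ∧
        ∀ E : ECtx, E.fv = ∅ →
          R (Tm.reset (t0'.subst k (contFun (E.comp E0))))
            (Tm.reset (t1'.subst k (contFun (E.comp E1)))))

/-- Applicative bisimulation. -/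
def IsAppBisim (R : Tm → Tm → Prop) : Prop :=
  IsAppSim R ∧ IsAppSim (fun a b => R b a)

/-- Applicative bisimilarity ≈_app: the largest applicative bisimulation. -/
def AppBisim (t0 t1 : Tm) : Prop := ∃ R, IsAppBisim R ∧ R t0 t1

/-- Simultaneous substitution (used only with closing substitutions mapping
variables to closed values, so no capture can occur). -/
def Tm.msubst : Tm → (ℕ → Tm) → Tm
  | .var x, σ => σ x
  | .lam x t, σ => Tm.lam x (t.msubst (Function.update σ x (Tm.var x)))
  | .app t u, σ => Tm.app (t.msubst σ) (u.msubst σ)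
  | .shift k t, σ => Tm.shift k (t.msubst (Function.update σ k (Tm.var k)))
  | .reset t, σ => Tm.reset (t.msubst σ)

/-- Open extension of a relation on closed terms: relate `t0σ` and `t1σ` for
every substitution σ mapping variables to closed values. -/
def OpenExt (R : Tm → Tm → Prop) (t0 t1 : Tm) : Prop :=
  ∀ σ : ℕ → Tm, (∀ x, IsValue (σ x) ∧ Closed (σ x)) →
    R (t0.msubst σ) (t1.msubst σ)

/-- ω := λx.x x. -/
def omegaTm : Tm := Tm.lam 0 (Tm.app (Tm.var 0) (Tm.var 0))

/-- Ω := ω ω, a diverging term. -/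
def OmegaTm : Tm := Tm.app omegaTm omegaTm

/-!
The reset in `⟨(λx.t) ⟨u⟩⟩` can act only by capturing or by delimiting a value. An argument that
never evaluates to a control-stuck term offers nothing to capture, so `⟨(λx.t) s⟩` and `(λx.⟨t⟩) s`
reduce `s` in lockstep until it is a value, and the two β-steps then yield the same term. The
instances of the axiom, together with the identity, therefore form an applicative bisimulation.
-/

theorem Tm.subst_reset (t : Tm) (x : ℕ) (v : Tm) :
    (Tm.reset t).subst x v = Tm.reset (t.subst x v) := by
  rw [Tm.subst]

/-- The contraction of a redex in the empty evaluation context; `Red` is its closure under `FCtx`.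
Separating the two lets inversion of `Red` split on the context and on the redex independently. -/
inductive Contract : Tm → Tm → Prop
  | beta (x : ℕ) (t : Tm) {v : Tm} (hv : IsValue v) :
      Contract (Tm.app (Tm.lam x t) v) (t.subst x v)
  | capture (E : ECtx) (k : ℕ) (t : Tm) :
      Contract (Tm.reset (E.plug (Tm.shift k t))) (Tm.reset (t.subst k (contFun E)))
  | resetVal {v : Tm} (hv : IsValue v) : Contract (Tm.reset v) v

theorem red_iff_exists_contract {t t' : Tm} :
    Red t t' ↔ ∃ F r c, Contract r c ∧ t = FCtx.plug F r ∧ t' = F.plug c := by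
  constructor
  · rintro (⟨F, x, u, v, hv⟩ | ⟨F, E, k, u⟩ | ⟨F, v, hv⟩)
    · exact ⟨F, _, _, .beta x u hv, rfl, rfl⟩
    · exact ⟨F, _, _, .capture E k u, rfl, rfl⟩
    · exact ⟨F, _, _, .resetVal hv, rfl, rfl⟩
  · rintro ⟨F, _, _, ⟨x, u, hv⟩ | ⟨E, k, u⟩ | hv, rfl, rfl⟩
    · exact .beta F x u _ hv
    · exact .capture F E k u
    · exact .resetVal F _ hv

theorem Contract.red {t t' : Tm} (h : Contract t t') : Red t t' :=
  red_iff_exists_contract.2 ⟨.hole, t, t', h, rfl, rfl⟩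

theorem Red.reset {t t' : Tm} (h : Red t t') : Red (Tm.reset t) (Tm.reset t') := by
  obtain ⟨F, r, c, hrc, rfl, rfl⟩ := red_iff_exists_contract.1 h
  exact red_iff_exists_contract.2 ⟨.reset F, r, c, hrc, rfl, rfl⟩

theorem Red.appR {v t t' : Tm} (hv : IsValue v) (h : Red t t') :
    Red (Tm.app v t) (Tm.app v t') := by
  obtain ⟨F, r, c, hrc, rfl, rfl⟩ := red_iff_exists_contract.1 h
  exact red_iff_exists_contract.2 ⟨.appR v hv F, r, c, hrc, rfl, rfl⟩

theorem IsValue.not_red {v t : Tm} (hv : IsValue v) : ¬ Red v t := by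
  intro h
  obtain ⟨F, r, c, hrc, rfl, rfl⟩ := red_iff_exists_contract.1 h
  cases F with
  | hole => cases hrc <;> cases hv
  | _ => cases hv

theorem IsValue.not_controlStuck {v : Tm} (hv : IsValue v) : ¬ ControlStuck v := by
  rintro ⟨E, k, u, rfl⟩
  cases E <;> cases hv

theorem not_controlStuck_reset (t : Tm) : ¬ ControlStuck (Tm.reset t) := by
  rintro ⟨E, k, u, h⟩
  cases E <;> cases h

theorem controlStuck_app_lam_iff {x : ℕ} {t s : Tm} :
    ControlStuck (Tm.app (Tm.lam x t) s) ↔ ControlStuck s := by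
  constructor
  · rintro ⟨E, k, u, h⟩
    cases E with
    | hole => cases h
    | appR v hv E => exact ⟨E, k, u, (Tm.app.inj h).2⟩
    | appL E w =>
      exact absurd ⟨E, k, u, (Tm.app.inj h).1⟩ (IsValue.lam x t).not_controlStuck
  · rintro ⟨E, k, u, rfl⟩
    exact ⟨.appR _ (.lam x t) E, k, u, rfl⟩

theorem red_reset_iff {t r : Tm} :
    Red (Tm.reset t) r ↔
      (∃ t', Red t t' ∧ r = Tm.reset t') ∨ (IsValue t ∧ r = t) ∨
        ∃ E k u, t = ECtx.plug E (Tm.shift k u) ∧ r = Tm.reset (u.subst k (contFun E)) := by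
  constructor
  · intro h
    obtain ⟨F, p, c, hpc, ht, rfl⟩ := red_iff_exists_contract.1 h
    cases F with
    | hole =>
      subst ht
      cases hpc with
      | capture E k u => exact .inr (.inr ⟨E, k, u, rfl, rfl⟩)
      | resetVal hv => exact .inr (.inl ⟨hv, rfl⟩)
    | reset F =>
      exact .inl ⟨_, red_iff_exists_contract.2 ⟨F, p, c, hpc, Tm.reset.inj ht, rfl⟩, rfl⟩
    | _ => cases ht
  · rintro (⟨t', h, rfl⟩ | ⟨hv, rfl⟩ | ⟨E, k, u, rfl, rfl⟩)
    · exact h.reset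
    · exact (Contract.resetVal hv).red
    · exact (Contract.capture E k u).red

theorem red_app_lam_iff {x : ℕ} {t s r : Tm} :
    Red (Tm.app (Tm.lam x t) s) r ↔
      (IsValue s ∧ r = t.subst x s) ∨ ∃ s', Red s s' ∧ r = Tm.app (Tm.lam x t) s' := by
  constructor
  · intro h
    obtain ⟨F, p, c, hpc, ht, rfl⟩ := red_iff_exists_contract.1 h
    cases F with
    | hole =>
      subst ht
      cases hpc with
      | beta _ _ hv => exact .inl ⟨hv, rfl⟩
    | appR v hv F =>
      obtain ⟨rfl, rfl⟩ := Tm.app.inj ht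
      exact .inr ⟨_, red_iff_exists_contract.2 ⟨F, p, c, hpc, rfl, rfl⟩, rfl⟩
    | appL F w =>
      exact absurd (red_iff_exists_contract.2 ⟨F, p, c, hpc, (Tm.app.inj ht).1, rfl⟩)
        (IsValue.lam x t).not_red
    | reset F => cases ht
  · rintro (⟨hv, rfl⟩ | ⟨s', h, rfl⟩)
    · exact (Contract.beta x t hv).red
    · exact h.appR (.lam x t)

theorem red_reset_app_lam_iff {x : ℕ} {t s r : Tm} (hs : ¬ ControlStuck s) :
    Red (Tm.reset (Tm.app (Tm.lam x t) s)) r ↔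
      (IsValue s ∧ r = Tm.reset (t.subst x s)) ∨
        ∃ s', Red s s' ∧ r = Tm.reset (Tm.app (Tm.lam x t) s') := by
  constructor
  · intro h
    rcases red_reset_iff.1 h with ⟨p, hp, rfl⟩ | ⟨hv, -⟩ | ⟨E, k, u, hE, -⟩
    · rcases red_app_lam_iff.1 hp with ⟨hv, rfl⟩ | ⟨s', hs', rfl⟩
      · exact .inl ⟨hv, rfl⟩
      · exact .inr ⟨s', hs', rfl⟩
    · cases hv
    · exact absurd (controlStuck_app_lam_iff.1 ⟨E, k, u, hE⟩) hs
  · rintro (⟨hv, rfl⟩ | ⟨s', hs', rfl⟩)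
    · exact (Contract.beta x t hv).red.reset
    · exact (hs'.appR (.lam x t)).reset

theorem isValue_or_eq_reset_of_reflTransGen {t s : Tm}
    (h : Relation.ReflTransGen Red (Tm.reset t) s) : IsValue s ∨ ∃ u, s = Tm.reset u := by
  induction h with
  | refl => exact .inr ⟨t, rfl⟩
  | tail _ hstep ih =>
    rcases ih with hv | ⟨u, rfl⟩
    · exact absurd hstep hv.not_red
    · rcases red_reset_iff.1 hstep with ⟨u', _, rfl⟩ | ⟨hv, rfl⟩ | ⟨_, _, _, _, rfl⟩
      · exact .inr ⟨_, rfl⟩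
      · exact .inl hv
      · exact .inr ⟨_, rfl⟩

theorem not_evalsToStuck_reset (t : Tm) : ¬ EvalsToStuck (Tm.reset t) := by
  rintro ⟨s, hts, hs⟩
  rcases isValue_or_eq_reset_of_reflTransGen hts with hv | ⟨u, rfl⟩
  · exact hv.not_controlStuck hs
  · exact not_controlStuck_reset u hs

theorem ControlStuck.evalsToStuck {t : Tm} (h : ControlStuck t) : EvalsToStuck t :=
  ⟨t, .refl, h⟩

theorem Red.evalsToStuck {t t' : Tm} (h : Red t t') : EvalsToStuck t' → EvalsToStuck t :=
  fun ⟨s, hs, hstuck⟩ => ⟨s, hs.head h, hstuck⟩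

theorem reflGen_swap {α : Type*} (R : α → α → Prop) :
    Relation.ReflGen (Function.swap R) = Function.swap (Relation.ReflGen R) := by
  ext a b
  simp only [Function.swap, Relation.reflGen_iff, eq_comm]

theorem isAppSim_reflGen {R : Tm → Tm → Prop} (not_value : ∀ a b, R a b → ¬ IsValue a)
    (not_stuck : ∀ a b, R a b → ¬ ControlStuck a)
    (red : ∀ a b a', R a b → Red a a' →
      ∃ b', Relation.ReflTransGen Red b b' ∧ Relation.ReflGen R a' b') :
    IsAppSim (Relation.ReflGen R) := by
  rintro a b (_ | hab)
  · exact ⟨fun a' h => ⟨a', .single h, .refl⟩,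
      fun x t h => ⟨t, h ▸ .refl, fun _ _ _ => .refl⟩,
      fun E k t h => ⟨E, t, h ▸ .refl, fun _ _ => .refl⟩⟩
  · exact ⟨fun a' => red a b a' hab,
      fun x t h => absurd (h ▸ .lam x t) (not_value a b hab),
      fun E k t h => absurd ⟨E, k, t, h⟩ (not_stuck a b hab)⟩

/-- The reset-lift axiom as a relation on terms, the candidate bisimulation up to identity. The
argument is any term that never evaluates to a control-stuck one, a condition which, unlike being
of the form `⟨t⟩`, is preserved by reduction. -/
inductive ResetLift : Tm → Tm → Prop
  | intro (x : ℕ) (t : Tm) {s : Tm} (hs : ¬ EvalsToStuck s) :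
      ResetLift (Tm.reset (Tm.app (Tm.lam x t) s)) (Tm.app (Tm.lam x (Tm.reset t)) s)

theorem isAppSim_resetLift : IsAppSim (Relation.ReflGen ResetLift) := by
  refine isAppSim_reflGen ?_ ?_ ?_
  · rintro _ _ ⟨x, t, hs⟩ ⟨⟩
  · rintro _ _ ⟨x, t, hs⟩
    exact not_controlStuck_reset _
  · rintro _ _ _ ⟨x, t, hs⟩ hred
    rcases (red_reset_app_lam_iff (mt ControlStuck.evalsToStuck hs)).1 hred with
      ⟨hv, rfl⟩ | ⟨s', hs', rfl⟩
    · rw [← Tm.subst_reset]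
      exact ⟨_, .single (red_app_lam_iff.2 (.inl ⟨hv, rfl⟩)), .refl⟩
    · exact ⟨_, .single (red_app_lam_iff.2 (.inr ⟨s', hs', rfl⟩)),
        .single (.intro x t (mt hs'.evalsToStuck hs))⟩

theorem isAppSim_swap_resetLift : IsAppSim (Relation.ReflGen (Function.swap ResetLift)) := by
  refine isAppSim_reflGen ?_ ?_ ?_
  · rintro _ _ ⟨x, t, hs⟩ ⟨⟩
  · rintro _ _ ⟨x, t, hs⟩
    exact mt controlStuck_app_lam_iff.1 (mt ControlStuck.evalsToStuck hs)
  · rintro _ _ _ ⟨x, t, hs⟩ hred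
    have hns := mt ControlStuck.evalsToStuck hs
    rcases red_app_lam_iff.1 hred with ⟨hv, rfl⟩ | ⟨s', hs', rfl⟩
    · rw [Tm.subst_reset]
      exact ⟨_, .single ((red_reset_app_lam_iff hns).2 (.inl ⟨hv, rfl⟩)), .refl⟩
    · exact ⟨_, .single ((red_reset_app_lam_iff hns).2 (.inr ⟨s', hs', rfl⟩)),
        .single (.intro x t (mt hs'.evalsToStuck hs))⟩

theorem isAppBisim_resetLift : IsAppBisim (Relation.ReflGen ResetLift) := by
  refine ⟨isAppSim_resetLift, ?_⟩
  have hsim := isAppSim_swap_resetLift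
  rwa [reflGen_swap] at hsim

theorem reset_lift_appBisim_general (x : ℕ) (t : Tm) {s : Tm} (hs : ¬ EvalsToStuck s) :
    AppBisim (Tm.reset (Tm.app (Tm.lam x t) s)) (Tm.app (Tm.lam x (Tm.reset t)) s) :=
  ⟨_, isAppBisim_resetLift, .single (.intro x t hs)⟩

/-- The reset-lift axiom is validated by applicative
bisimilarity: `⟨(λx.t0) ⟨t1⟩⟩ ≈_app (λx.⟨t0⟩) ⟨t1⟩` whenever both sides are
closed. -/
theorem reset_lift_appBisim (x : ℕ) (t0 t1 : Tm)
    (h0 : Closed (Tm.reset (Tm.app (Tm.lam x t0) (Tm.reset t1))))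
    (h1 : Closed (Tm.app (Tm.lam x (Tm.reset t0)) (Tm.reset t1))) :
    AppBisim (Tm.reset (Tm.app (Tm.lam x t0) (Tm.reset t1)))
             (Tm.app (Tm.lam x (Tm.reset t0)) (Tm.reset t1)) :=
  reset_lift_appBisim_general x t0 (not_evalsToStuck_reset t1)

end LambdaS
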